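/- Assume hypotheses (H1) and (H2). If X_α is an optimal solution of Problem 2.1, then Q_α(X_α) = sup_{X ∈ 𝒳_α} Q_α(X) = sup_{X ∈ 𝒳_α} E_{λQ_α^c}[X] + sup_{X ∈ 𝒳_α} (1−λ)·Q_α^p(X). -/

import Mathlib

open MeasureTheory Filter Topology
open scoped ENNReal

/-- `X` belongs to the space `𝒳` of bounded measurable real-valued functions on `Ω`. -/
def MemX {Ω : Type*} [MeasurableSpace Ω] (X : Ω → ℝ) : Prop :=
  Measurable X ∧ ∃ M : ℝ, ∀ ω, |X ω| ≤ M

/-- A sublinear operator on `𝒳`: monotone, constant preserving, subadditive and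
positively homogeneous. -/
def IsSublinearOp {Ω : Type*} [MeasurableSpace Ω] (ρ : (Ω → ℝ) → ℝ) : Prop :=
  (∀ X Y : Ω → ℝ, MemX X → MemX Y → (∀ ω, Y ω ≤ X ω) → ρ Y ≤ ρ X) ∧
  (∀ c : ℝ, ρ (fun _ => c) = c) ∧
  (∀ X Y : Ω → ℝ, MemX X → MemX Y → ρ (X + Y) ≤ ρ X + ρ Y) ∧
  (∀ c : ℝ, 0 ≤ c → ∀ X : Ω → ℝ, MemX X → ρ (c • X) = c * ρ X)

/-- A linear functional on `𝒳`. -/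
def IsLinearOp {Ω : Type*} [MeasurableSpace Ω] (L : (Ω → ℝ) → ℝ) : Prop :=
  (∀ X Y : Ω → ℝ, MemX X → MemX Y → L (X + Y) = L X + L Y) ∧
  (∀ (c : ℝ) (X : Ω → ℝ), MemX X → L (c • X) = c * L X)

/-- `L` is dominated by `ρ` on `𝒳`. -/
def Dominated {Ω : Type*} [MeasurableSpace Ω] (L ρ : (Ω → ℝ) → ℝ) : Prop :=
  ∀ X : Ω → ℝ, MemX X → L X ≤ ρ X

/-- The conjugate operator `E_ῡ[X] := -E_υ[-X]`. -/
def conjOp {Ω : Type*} (ρ : (Ω → ℝ) → ℝ) : (Ω → ℝ) → ℝ := fun X => -ρ (-X)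

/-- The set `𝒳_α` of test functions at significance level `α`. -/
def testSet {Ω : Type*} [MeasurableSpace Ω] (Emu : (Ω → ℝ) → ℝ) (α : ℝ) : Set (Ω → ℝ) :=
  {X | MemX X ∧ (∀ ω, 0 ≤ X ω ∧ X ω ≤ 1) ∧ Emu X ≤ α}

/-- A positive normalized linear functional `Qp` is *pure additive* if there is a
sequence of measurable sets `A n ↓ ∅` with `Qp(1_{A n}) → 1`. -/
def PureAdditive {Ω : Type*} [MeasurableSpace Ω] (Qp : (Ω → ℝ) → ℝ) : Prop :=
  ∃ A : ℕ → Set Ω, (∀ n, MeasurableSet (A n)) ∧ Antitone A ∧ (⋂ n, A n) = ∅ ∧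
    Tendsto (fun n => Qp ((A n).indicator fun _ => (1 : ℝ))) atTop (𝓝 1)

/-- Hypothesis (H1): for every sequence of measurable sets `A n ↓ ∅` such that
`lim E_υ[1_{A n}]` exists and is nonzero, one has `lim E_μ[1_{A n}] = 0`. -/
def HypH1 {Ω : Type*} [MeasurableSpace Ω] (Emu Eups : (Ω → ℝ) → ℝ) : Prop :=
  ∀ A : ℕ → Set Ω, (∀ n, MeasurableSet (A n)) → Antitone A → (⋂ n, A n) = ∅ →
    ∀ l : ℝ, Tendsto (fun n => Eups ((A n).indicator fun _ => (1 : ℝ))) atTop (𝓝 l) →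
      l ≠ 0 →
      Tendsto (fun n => Emu ((A n).indicator fun _ => (1 : ℝ))) atTop (𝓝 0)

/-- Hypothesis (H2): for every `X ∈ 𝒳_α` with `E_μ[X] > 0` and every positive
integer `K`, `E_μ[X] > E_μ[(X - 1/K)⁺]`. -/
def HypH2 {Ω : Type*} [MeasurableSpace Ω] (Emu : (Ω → ℝ) → ℝ) (α : ℝ) : Prop :=
  ∀ X ∈ testSet Emu α, 0 < Emu X → ∀ K : ℕ, 0 < K →
    Emu (fun ω => max (X ω - 1 / (K : ℝ)) 0) < Emu X

/-- Hypothesis (H3): for every sequence of measurable sets `A n ↓ ∅`,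
`lim E_μ[1_{A n}] < 1` and `lim E_υ[1_{A n}] < 1`. -/
def HypH3 {Ω : Type*} [MeasurableSpace Ω] (Emu Eups : (Ω → ℝ) → ℝ) : Prop :=
  ∀ A : ℕ → Set Ω, (∀ n, MeasurableSet (A n)) → Antitone A → (⋂ n, A n) = ∅ →
    (∀ l : ℝ, Tendsto (fun n => Emu ((A n).indicator fun _ => (1 : ℝ))) atTop (𝓝 l) →
      l < 1) ∧
    (∀ l : ℝ, Tendsto (fun n => Eups ((A n).indicator fun _ => (1 : ℝ))) atTop (𝓝 l) →
      l < 1)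

/-!
Write `Q_α = P + N` with `P = λ E_{Q_α^c}` and `N = (1 - λ) Q_α^p`. Optimality of `X_α` gives the
first equality, because a linear functional dominated by `E_υ` lies above the conjugate of `E_υ`.
For the second, `N` concentrates on sets `A n ↓ ∅`, and if `N ≠ 0` then `E_υ[1_{A n}]` does not
tend to `0`, so (H1) forces `E_μ[1_{A n}] → 0`. Shrinking a test `X` by the factor
`1 - E_μ[1_{A n}] / α` frees exactly the budget needed to reject on `A n`: the tests
`(1 - E_μ[1_{A n}] / α) X ⊔ 1_{A n}` lie in `𝒳_α`, and in the limit they collect `P X` together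
with the full mass `N 1`.
-/

section

theorem indicator_one_nonneg {Ω : Type*} (A : Set Ω) (ω : Ω) :
    0 ≤ A.indicator (fun _ => (1 : ℝ)) ω :=
  Set.indicator_nonneg (fun _ _ => zero_le_one) ω

variable {Ω : Type*} [MeasurableSpace Ω]

theorem memX_const (c : ℝ) : MemX fun _ : Ω => c :=
  ⟨measurable_const, |c|, fun _ => le_rfl⟩

namespace MemX

variable {X Y : Ω → ℝ}

theorem add (hX : MemX X) (hY : MemX Y) : MemX (X + Y) := by
  obtain ⟨hXm, M, hM⟩ := hX
  obtain ⟨hYm, K, hK⟩ := hY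
  exact ⟨hXm.add hYm, M + K, fun ω => (abs_add_le _ _).trans (add_le_add (hM ω) (hK ω))⟩

theorem const_smul (hX : MemX X) (c : ℝ) : MemX (c • X) := by
  obtain ⟨hXm, M, hM⟩ := hX
  refine ⟨hXm.const_smul c, |c| * M, fun ω => ?_⟩
  rw [Pi.smul_apply, smul_eq_mul, abs_mul]
  exact mul_le_mul_of_nonneg_left (hM ω) (abs_nonneg c)

theorem neg (hX : MemX X) : MemX (-X) := by
  simpa only [neg_one_smul] using hX.const_smul (-1)

theorem sub (hX : MemX X) (hY : MemX Y) : MemX (X - Y) := by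
  simpa only [sub_eq_add_neg] using hX.add hY.neg

theorem sup (hX : MemX X) (hY : MemX Y) : MemX (X ⊔ Y) := by
  obtain ⟨hXm, M, hM⟩ := hX
  obtain ⟨hYm, K, hK⟩ := hY
  exact ⟨hXm.sup hYm, max M K, fun ω => abs_max_le_max_abs_abs.trans (max_le_max (hM ω) (hK ω))⟩

theorem indicator (hX : MemX X) {A : Set Ω} (hA : MeasurableSet A) : MemX (A.indicator X) := by
  obtain ⟨hXm, M, hM⟩ := hX
  exact ⟨hXm.indicator hA, M, fun ω => (norm_indicator_le_norm_self X ω).trans (hM ω)⟩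

theorem integrable (hX : MemX X) (μ : Measure Ω) [IsFiniteMeasure μ] : Integrable X μ := by
  obtain ⟨hXm, M, hM⟩ := hX
  exact .of_bound hXm.aestronglyMeasurable M (.of_forall hM)

end MemX

theorem memX_indicator_one {A : Set Ω} (hA : MeasurableSet A) :
    MemX (A.indicator fun _ => (1 : ℝ)) :=
  (memX_const 1).indicator hA

/-- A positive linear functional on `𝒳`, not assumed normalized, so that both components `λ E_{Q^c}`
and `(1 - λ) Q^p` of a decomposition are instances. -/
structure IsPositiveLinearOp (L : (Ω → ℝ) → ℝ) : Prop where
  isLinearOp : IsLinearOp L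
  nonneg : ∀ X : Ω → ℝ, MemX X → (∀ ω, 0 ≤ X ω) → 0 ≤ L X

theorem isPositiveLinearOp_integral (μ : Measure Ω) [IsFiniteMeasure μ] :
    IsPositiveLinearOp fun X : Ω → ℝ => ∫ ω, X ω ∂μ where
  isLinearOp := ⟨fun _ _ hX hY => integral_add (hX.integrable μ) (hY.integrable μ),
    fun c X _ => integral_const_mul c X⟩
  nonneg _ _ h := integral_nonneg h

namespace IsPositiveLinearOp

variable {L N : (Ω → ℝ) → ℝ} {X Y : Ω → ℝ}

theorem add (hL : IsPositiveLinearOp L) (hN : IsPositiveLinearOp N) :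
    IsPositiveLinearOp fun X => L X + N X where
  isLinearOp := by
    refine ⟨fun X Y hX hY => ?_, fun c X hX => ?_⟩
    · simp only [hL.isLinearOp.1 X Y hX hY, hN.isLinearOp.1 X Y hX hY, add_add_add_comm]
    · simp only [hL.isLinearOp.2 c X hX, hN.isLinearOp.2 c X hX, mul_add]
  nonneg X hX h := add_nonneg (hL.nonneg X hX h) (hN.nonneg X hX h)

theorem const_mul (hL : IsPositiveLinearOp L) {c : ℝ} (hc : 0 ≤ c) :
    IsPositiveLinearOp fun X => c * L X where
  isLinearOp := by
    refine ⟨fun X Y hX hY => ?_, fun b X hX => ?_⟩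
    · simp only [hL.isLinearOp.1 X Y hX hY, mul_add]
    · simp only [hL.isLinearOp.2 b X hX, mul_left_comm]
  nonneg X hX h := mul_nonneg hc (hL.nonneg X hX h)

theorem congr (hN : IsPositiveLinearOp N) (h : ∀ X, MemX X → L X = N X) :
    IsPositiveLinearOp L where
  isLinearOp := by
    refine ⟨fun X Y hX hY => ?_, fun c X hX => ?_⟩
    · rw [h _ (hX.add hY), h X hX, h Y hY, hN.isLinearOp.1 X Y hX hY]
    · rw [h _ (hX.const_smul c), h X hX, hN.isLinearOp.2 c X hX]
  nonneg X hX h₀ := (h X hX).symm ▸ hN.nonneg X hX h₀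

theorem mono (hL : IsPositiveLinearOp L) (hX : MemX X) (hY : MemX Y) (h : ∀ ω, X ω ≤ Y ω) :
    L X ≤ L Y := by
  have h_add : L Y = L X + L (Y - X) := by
    rw [← hL.isLinearOp.1 X (Y - X) hX (hY.sub hX), add_sub_cancel]
  have h_nonneg : 0 ≤ L (Y - X) := hL.nonneg _ (hY.sub hX) fun ω => sub_nonneg.2 (h ω)
  linarith

theorem map_le_map_one (hL : IsPositiveLinearOp L) {Emu : (Ω → ℝ) → ℝ} {α : ℝ}
    (hX : X ∈ testSet Emu α) : L X ≤ L fun _ => 1 :=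
  hL.mono hX.1 (memX_const 1) fun ω => (hX.2.1 ω).2

theorem bddAbove_image_testSet (hL : IsPositiveLinearOp L) (Emu : (Ω → ℝ) → ℝ) (α : ℝ) :
    BddAbove (L '' testSet Emu α) :=
  ⟨L fun _ => 1, Set.forall_mem_image.2 fun _ => hL.map_le_map_one⟩

theorem le_sSup_image_testSet (hL : IsPositiveLinearOp L) {Emu : (Ω → ℝ) → ℝ} {α : ℝ}
    (hX : X ∈ testSet Emu α) : L X ≤ sSup (L '' testSet Emu α) :=
  le_csSup (hL.bddAbove_image_testSet Emu α) ⟨X, hX, rfl⟩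

end IsPositiveLinearOp

theorem Dominated.conjOp_le {L ρ : (Ω → ℝ) → ℝ} (hLρ : Dominated L ρ) (hL : IsLinearOp L)
    {X : Ω → ℝ} (hX : MemX X) : conjOp ρ X ≤ L X := by
  have h_neg : L (-X) = -L X := by simpa using hL.2 (-1) X hX
  exact neg_le.1 (h_neg ▸ hLρ (-X) hX.neg)

theorem IsSublinearOp.map_indicator_one_nonneg {ρ : (Ω → ℝ) → ℝ} (hρ : IsSublinearOp ρ) {A : Set Ω}
    (hA : MeasurableSet A) : 0 ≤ ρ (A.indicator fun _ => (1 : ℝ)) :=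
  (hρ.2.1 0).ge.trans
    (hρ.1 _ _ (memX_indicator_one hA) (memX_const 0) (indicator_one_nonneg A))

theorem zero_mem_testSet {Emu : (Ω → ℝ) → ℝ} (hEmu : IsSublinearOp Emu) {α : ℝ} (hα : 0 ≤ α) :
    (fun _ => 0) ∈ testSet Emu α :=
  ⟨memX_const 0, fun _ => ⟨le_rfl, zero_le_one⟩, (hEmu.2.1 0).trans_le hα⟩

theorem smul_sup_indicator_mem_testSet {Emu : (Ω → ℝ) → ℝ} (hEmu : IsSublinearOp Emu) {α t : ℝ}
    (ht₀ : 0 ≤ t) (ht₁ : t ≤ 1) {A : Set Ω} (hA : MeasurableSet A)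
    (hbudget : t * α + Emu (A.indicator fun _ => (1 : ℝ)) ≤ α) {X : Ω → ℝ}
    (hX : X ∈ testSet Emu α) :
    t • X ⊔ A.indicator (fun _ => (1 : ℝ)) ∈ testSet Emu α := by
  obtain ⟨h_mono, -, h_add, h_smul⟩ := hEmu
  obtain ⟨hXmem, hX01, hXα⟩ := hX
  set I : Ω → ℝ := A.indicator fun _ => 1
  have hI : MemX I := memX_indicator_one hA
  have hI₀ : ∀ ω, 0 ≤ I ω := indicator_one_nonneg A
  have htX : MemX (t • X) := hXmem.const_smul t
  have htX₀ : ∀ ω, 0 ≤ (t • X) ω := fun ω => mul_nonneg ht₀ (hX01 ω).1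
  refine ⟨htX.sup hI, fun ω => ⟨le_sup_of_le_right (hI₀ ω), sup_le ?_ ?_⟩, ?_⟩
  · exact mul_le_one₀ ht₁ (hX01 ω).1 (hX01 ω).2
  · exact Set.indicator_le_self' (fun _ _ => zero_le_one) ω
  · calc Emu (t • X ⊔ I)
        ≤ Emu (t • X + I) := h_mono _ _ (htX.add hI) (htX.sup hI) fun ω =>
          sup_le (le_add_of_nonneg_right (hI₀ ω)) (le_add_of_nonneg_left (htX₀ ω))
      _ ≤ Emu (t • X) + Emu I := h_add _ _ htX hI
      _ = t * Emu X + Emu I := by rw [h_smul t ht₀ X hXmem]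
      _ ≤ t * α + Emu I := by gcongr
      _ ≤ α := hbudget

theorem add_map_one_le_sSup_image_testSet {Emu : (Ω → ℝ) → ℝ} (hEmu : IsSublinearOp Emu) {α : ℝ}
    (hα : 0 < α) {L P N : (Ω → ℝ) → ℝ} (hP : IsPositiveLinearOp P) (hN : IsPositiveLinearOp N)
    (hL : ∀ X, MemX X → L X = P X + N X) {ι : Type*} {l : Filter ι} [l.NeBot] {A : ι → Set Ω}
    (hA : ∀ i, MeasurableSet (A i))
    (hNA : Tendsto (fun i => N ((A i).indicator fun _ => (1 : ℝ))) l (𝓝 (N fun _ => 1)))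
    (hEmuA : Tendsto (fun i => Emu ((A i).indicator fun _ => (1 : ℝ))) l (𝓝 0))
    {X : Ω → ℝ} (hX : X ∈ testSet Emu α) :
    P X + N (fun _ => 1) ≤ sSup (L '' testSet Emu α) := by
  let I : ι → Ω → ℝ := fun i => (A i).indicator fun _ => 1
  let t : ι → ℝ := fun i => 1 - Emu (I i) / α
  have ht : Tendsto t l (𝓝 1) := by simpa using (hEmuA.div_const α).const_sub 1
  have h_lim : Tendsto (fun i => t i * P X + N (I i)) l (𝓝 (P X + N fun _ => 1)) := by
    simpa using (ht.mul_const (P X)).add hNA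
  refine le_of_tendsto h_lim ?_
  filter_upwards [ht.eventually_const_le zero_lt_one] with i ht₀
  have hI : MemX (I i) := memX_indicator_one (hA i)
  have htX : MemX (t i • X) := hX.1.const_smul (t i)
  have ht₁ : t i ≤ 1 :=
    sub_le_self 1 (div_nonneg (hEmu.map_indicator_one_nonneg (hA i)) hα.le)
  have h_budget : t i * α + Emu (I i) ≤ α := by
    rw [sub_mul, div_mul_cancel₀ _ hα.ne', one_mul, sub_add_cancel]
  have hZ : t i • X ⊔ I i ∈ testSet Emu α :=
    smul_sup_indicator_mem_testSet hEmu ht₀ ht₁ (hA i) h_budget hX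
  calc t i * P X + N (I i)
      = P (t i • X) + N (I i) := by rw [hP.isLinearOp.2 (t i) X hX.1]
    _ ≤ P (t i • X ⊔ I i) + N (t i • X ⊔ I i) :=
        add_le_add (hP.mono htX hZ.1 fun _ => le_sup_left) (hN.mono hI hZ.1 fun _ => le_sup_right)
    _ = L (t i • X ⊔ I i) := (hL _ hZ.1).symm
    _ ≤ sSup (L '' testSet Emu α) := ((hP.add hN).congr hL).le_sSup_image_testSet hZ

theorem sSup_image_testSet_eq_add {Emu : (Ω → ℝ) → ℝ} (hEmu : IsSublinearOp Emu) {α : ℝ}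
    (hα : 0 < α) {L P N : (Ω → ℝ) → ℝ} (hP : IsPositiveLinearOp P) (hN : IsPositiveLinearOp N)
    (hL : ∀ X, MemX X → L X = P X + N X) {ι : Type*} {l : Filter ι} [l.NeBot] {A : ι → Set Ω}
    (hA : ∀ i, MeasurableSet (A i))
    (hNA : Tendsto (fun i => N ((A i).indicator fun _ => (1 : ℝ))) l (𝓝 (N fun _ => 1)))
    (hEmuA : Tendsto (fun i => Emu ((A i).indicator fun _ => (1 : ℝ))) l (𝓝 0)) :
    sSup (L '' testSet Emu α) = sSup (P '' testSet Emu α) + sSup (N '' testSet Emu α) := by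
  have h_ne : (testSet Emu α).Nonempty := ⟨_, zero_mem_testSet hEmu hα.le⟩
  apply le_antisymm
  · refine csSup_le (h_ne.image L) (Set.forall_mem_image.2 fun X hX => ?_)
    rw [hL X hX.1]
    exact add_le_add (hP.le_sSup_image_testSet hX) (hN.le_sSup_image_testSet hX)
  · have hN_le : sSup (N '' testSet Emu α) ≤ N fun _ => 1 :=
      csSup_le (h_ne.image N) (Set.forall_mem_image.2 fun _ => hN.map_le_map_one)
    have hP_le : sSup (P '' testSet Emu α) ≤ sSup (L '' testSet Emu α) - N fun _ => 1 :=
      csSup_le (h_ne.image P) (Set.forall_mem_image.2 fun _ hX => le_sub_iff_add_le.2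
        (add_map_one_le_sSup_image_testSet hEmu hα hP hN hL hA hNA hEmuA hX))
    linarith

theorem HypH1.tendsto_zero_of_le {Emu Eups : (Ω → ℝ) → ℝ} (hH1 : HypH1 Emu Eups)
    (hEups : IsSublinearOp Eups) {A : ℕ → Set Ω} (hA : ∀ n, MeasurableSet (A n))
    (hA_anti : Antitone A) (hA_empty : ⋂ n, A n = ∅) {b : ℕ → ℝ} {c : ℝ} (hc : 0 < c)
    (hb : Tendsto b atTop (𝓝 c)) (hb_le : ∀ n, b n ≤ Eups ((A n).indicator fun _ => (1 : ℝ))) :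
    Tendsto (fun n => Emu ((A n).indicator fun _ => (1 : ℝ))) atTop (𝓝 0) := by
  have h_anti : Antitone fun n => Eups ((A n).indicator fun _ => (1 : ℝ)) := fun m n hmn =>
    hEups.1 _ _ (memX_indicator_one (hA m)) (memX_indicator_one (hA n))
      (Set.indicator_le_indicator_of_subset (hA_anti hmn) fun _ => zero_le_one)
  have h_lim := tendsto_atTop_ciInf h_anti
    ⟨0, Set.forall_mem_range.2 fun n => hEups.map_indicator_one_nonneg (hA n)⟩
  exact hH1 A hA hA_anti hA_empty _ h_lim
    (hc.trans_le (le_of_tendsto_of_tendsto' hb h_lim hb_le)).ne'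

theorem exists_tendsto_indicator_of_pureAdditive {Emu Eups : (Ω → ℝ) → ℝ}
    (hEmu : IsSublinearOp Emu) (hEups : IsSublinearOp Eups) (hH1 : HypH1 Emu Eups)
    {Qp : (Ω → ℝ) → ℝ} (hQp_pure : PureAdditive Qp) {c : ℝ} (hc : 0 ≤ c)
    (hQp_le : ∀ X, MemX X → (∀ ω, 0 ≤ X ω) → c * Qp X ≤ Eups X) :
    ∃ A : ℕ → Set Ω, (∀ n, MeasurableSet (A n)) ∧
      Tendsto (fun n => c * Qp ((A n).indicator fun _ => (1 : ℝ))) atTop (𝓝 c) ∧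
      Tendsto (fun n => Emu ((A n).indicator fun _ => (1 : ℝ))) atTop (𝓝 0) := by
  rcases hc.eq_or_lt with rfl | hc_pos
  · refine ⟨fun _ => ∅, fun _ => .empty, by simp, ?_⟩
    simpa only [Set.indicator_empty, hEmu.2.1] using tendsto_const_nhds
  · obtain ⟨A, hA, hA_anti, hA_empty, hQpA⟩ := hQp_pure
    have hcQpA : Tendsto (fun n => c * Qp ((A n).indicator fun _ => (1 : ℝ))) atTop (𝓝 c) := by
      simpa only [mul_one] using hQpA.const_mul c
    exact ⟨A, hA, hcQpA, hH1.tendsto_zero_of_le hEups hA hA_anti hA_empty hc_pos hcQpA fun n =>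
      hQp_le _ (memX_indicator_one (hA n)) (indicator_one_nonneg (A n))⟩

theorem Qalpha_sup_splits_general {Emu Eups : (Ω → ℝ) → ℝ} (hEmu : IsSublinearOp Emu)
    (hEups : IsSublinearOp Eups) {α : ℝ} (hα : 0 < α) {P Qp : (Ω → ℝ) → ℝ}
    (hP : IsPositiveLinearOp P) (hQp : IsPositiveLinearOp Qp) (hQp_one : Qp (fun _ => 1) = 1)
    (hQp_pure : PureAdditive Qp) {c : ℝ} (hc : 0 ≤ c) {Qa : (Ω → ℝ) → ℝ}
    (hQa_dom : Dominated Qa Eups)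
    (hQa_sup : sSup (Qa '' testSet Emu α) = sSup (conjOp Eups '' testSet Emu α))
    (hQa_eq : ∀ X, MemX X → Qa X = P X + c * Qp X) (hH1 : HypH1 Emu Eups) {Xa : Ω → ℝ}
    (hXa : Xa ∈ testSet Emu α) (hXa_opt : conjOp Eups Xa = sSup (conjOp Eups '' testSet Emu α)) :
    Qa Xa = sSup (Qa '' testSet Emu α) ∧
      sSup (Qa '' testSet Emu α) =
        sSup (P '' testSet Emu α) + sSup ((fun X => c * Qp X) '' testSet Emu α) := by
  have hcQp : IsPositiveLinearOp fun X => c * Qp X := hQp.const_mul hc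
  have hQa : IsPositiveLinearOp Qa := (hP.add hcQp).congr hQa_eq
  have hcQp_le : ∀ X, MemX X → (∀ ω, 0 ≤ X ω) → c * Qp X ≤ Eups X := fun X hX hX₀ =>
    calc c * Qp X ≤ P X + c * Qp X := le_add_of_nonneg_left (hP.nonneg X hX hX₀)
      _ = Qa X := (hQa_eq X hX).symm
      _ ≤ Eups X := hQa_dom X hX
  obtain ⟨A, hA, hcQpA, hEmuA⟩ :=
    exists_tendsto_indicator_of_pureAdditive hEmu hEups hH1 hQp_pure hc hcQp_le
  constructor
  · refine le_antisymm (hQa.le_sSup_image_testSet hXa) ?_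
    rw [hQa_sup, ← hXa_opt]
    exact hQa_dom.conjOp_le hQa.isLinearOp hXa.1
  · exact sSup_image_testSet_eq_add hEmu hα hP hcQp hQa_eq hA
      (by simpa only [hQp_one, mul_one] using hcQpA) hEmuA

end

/-- Lemma 4.4: under (H1) and (H2), if `X_α` is an optimal solution of Problem 2.1,
then `Q_α(X_α) = sup_{𝒳_α} Q_α = sup_{𝒳_α} E_{λQ_α^c} + sup_{𝒳_α} (1-λ)Q_α^p`. -/
theorem Qalpha_sup_splits {Ω : Type*} [MeasurableSpace Ω]
    (Emu Eups : (Ω → ℝ) → ℝ)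
    (hEmu : IsSublinearOp Emu) (hEups : IsSublinearOp Eups)
    (α : ℝ) (hα0 : 0 < α) (hα1 : α < 1)
    (lam : ℝ) (hlam0 : 0 ≤ lam) (hlam1 : lam ≤ 1)
    (Qc : Measure Ω) (hQc : IsProbabilityMeasure Qc)
    (Qp : (Ω → ℝ) → ℝ) (hQplin : IsLinearOp Qp)
    (hQppos : ∀ X : Ω → ℝ, MemX X → (∀ ω, 0 ≤ X ω) → 0 ≤ Qp X)
    (hQpone : Qp (fun _ => 1) = 1) (hQppure : PureAdditive Qp)
    (Qa : (Ω → ℝ) → ℝ) (hQalin : IsLinearOp Qa) (hQadom : Dominated Qa Eups)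
    (hQasup : sSup (Qa '' testSet Emu α) = sSup (conjOp Eups '' testSet Emu α))
    (hQadec : ∀ X : Ω → ℝ, MemX X → Qa X = lam * ∫ ω, X ω ∂Qc + (1 - lam) * Qp X)
    (hH1 : HypH1 Emu Eups) (hH2 : HypH2 Emu α)
    (Xa : Ω → ℝ) (hXa : Xa ∈ testSet Emu α)
    (hXopt : conjOp Eups Xa = sSup (conjOp Eups '' testSet Emu α)) :
    Qa Xa = sSup (Qa '' testSet Emu α) ∧
    sSup (Qa '' testSet Emu α) =
      sSup ((fun X : Ω → ℝ => lam * ∫ ω, X ω ∂Qc) '' testSet Emu α) +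
      sSup ((fun X : Ω → ℝ => (1 - lam) * Qp X) '' testSet Emu α) :=
  Qalpha_sup_splits_general hEmu hEups hα0 ((isPositiveLinearOp_integral Qc).const_mul hlam0)
    ⟨hQplin, hQppos⟩ hQpone hQppure (sub_nonneg.2 hlam1) hQadom hQasup hQadec hH1 hXa hXopt
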